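/- Let B_ω be the free Boolean algebra on countably many generators (equivalently, the countable atomless Boolean algebra). There is no lattice embedding of B_ω into H_n for any n ≥ 1, and no lattice embedding of B_ω into H_ω; that is, there is no injective map from B_ω into any of these free Heyting algebras preserving ∧ and ∨. -/

import Mathlib

/-!
The argument uses only that `B_ω` is an infinite Boolean algebra.

In intuitionistic logic every finite theory is a finite "disjunction" of theories with the
disjunction property (`exists_finite_prime_decomposition`).  Indeed, let `S` be a finite set of
formulas closed under subformulas and `Γ ⊆ S`.  If, for every disjunction `A ∨ B` in `S` proved
by `Γ`, the theory `Γ` proves `A` or `B`, then `Γ` is related to each of its own members by the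
Aczel slash, and so it has the disjunction property.  Otherwise some `A ∨ B ∈ S` is proved by `Γ`
while neither `A` nor `B` is, so `Γ` has the same consequences as the pair `Γ ∪ {A}`, `Γ ∪ {B}`
taken together, and both are strictly larger subsets of `S`; as `S` is finite, this stops.

Given a lattice embedding `f`, decompose `f ⊤` into finitely many prime theories `Δ ∈ L` and send
`x` to `{Δ ∈ L | Δ ⊢ f x}`.  This map is injective: if every `Δ ∈ L` proving `f x` proves `f y`,
then, since each `Δ` proves `f x ∨ f (¬x) = f ⊤` and is prime, each `Δ` proves `f (y ∨ ¬x)`;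
hence `f ⊤ ≤ f (y ∨ ¬x)`, so `y ∨ ¬x = ⊤`, that is `x ≤ y`.  Thus `B_ω` would be finite, whereas
its generators are pairwise distinct.
-/


/-- Propositional formulas over a set `V` of variables, built from `∧, ∨, →, ⊥, ⊤`.
`¬φ` is the abbreviation `φ → ⊥`. -/
inductive PropForm (V : Type) : Type
  | var : V → PropForm V
  | bot : PropForm V
  | top : PropForm V
  | and : PropForm V → PropForm V → PropForm V
  | or : PropForm V → PropForm V → PropForm V
  | imp : PropForm V → PropForm V → PropForm V

/-- A natural-deduction style consequence relation.  When the parameter `cl` is `False`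
this is exactly the consequence relation `⊢` of intuitionistic propositional logic;
when `cl` is `True` the rule of excluded middle becomes available and it is the
consequence relation `⊢_C` of classical propositional logic. -/
inductive Prov {V : Type} (cl : Prop) : Set (PropForm V) → PropForm V → Prop
  | ax : ∀ {Γ : Set (PropForm V)} {φ}, φ ∈ Γ → Prov cl Γ φ
  | topI : ∀ {Γ}, Prov cl Γ .top
  | botE : ∀ {Γ φ}, Prov cl Γ .bot → Prov cl Γ φ
  | andI : ∀ {Γ φ ψ}, Prov cl Γ φ → Prov cl Γ ψ → Prov cl Γ (.and φ ψ)
  | andE1 : ∀ {Γ φ ψ}, Prov cl Γ (.and φ ψ) → Prov cl Γ φ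
  | andE2 : ∀ {Γ φ ψ}, Prov cl Γ (.and φ ψ) → Prov cl Γ ψ
  | orI1 : ∀ {Γ φ ψ}, Prov cl Γ φ → Prov cl Γ (.or φ ψ)
  | orI2 : ∀ {Γ φ ψ}, Prov cl Γ ψ → Prov cl Γ (.or φ ψ)
  | orE : ∀ {Γ φ ψ χ}, Prov cl Γ (.or φ ψ) → Prov cl (insert φ Γ) χ →
      Prov cl (insert ψ Γ) χ → Prov cl Γ χ
  | impI : ∀ {Γ φ ψ}, Prov cl (insert φ Γ) ψ → Prov cl Γ (.imp φ ψ)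
  | impE : ∀ {Γ φ ψ}, Prov cl Γ (.imp φ ψ) → Prov cl Γ φ → Prov cl Γ ψ
  | em : ∀ {Γ φ}, cl → Prov cl Γ (.or φ (.imp φ .bot))

/-- Intuitionistic consequence `Γ ⊢ φ`. -/
abbrev IProv {V : Type} (Γ : Set (PropForm V)) (φ : PropForm V) : Prop := Prov False Γ φ

/-- Classical consequence `Γ ⊢_C φ`. -/
abbrev CProv {V : Type} (Γ : Set (PropForm V)) (φ : PropForm V) : Prop := Prov True Γ φ

theorem Prov.mono {V : Type} {cl : Prop} {Γ : Set (PropForm V)} {φ : PropForm V}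
    (h : Prov cl Γ φ) : ∀ {Δ : Set (PropForm V)}, Γ ⊆ Δ → Prov cl Δ φ := by
  induction h with
  | ax hmem => intro Δ hsub; exact Prov.ax (hsub hmem)
  | topI => intro Δ _; exact Prov.topI
  | botE _ ih => intro Δ hsub; exact Prov.botE (ih hsub)
  | andI _ _ ih1 ih2 => intro Δ hsub; exact Prov.andI (ih1 hsub) (ih2 hsub)
  | andE1 _ ih => intro Δ hsub; exact Prov.andE1 (ih hsub)
  | andE2 _ ih => intro Δ hsub; exact Prov.andE2 (ih hsub)
  | orI1 _ ih => intro Δ hsub; exact Prov.orI1 (ih hsub)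
  | orI2 _ ih => intro Δ hsub; exact Prov.orI2 (ih hsub)
  | orE _ _ _ ih1 ih2 ih3 =>
      intro Δ hsub
      exact Prov.orE (ih1 hsub) (ih2 (Set.insert_subset_insert hsub))
        (ih3 (Set.insert_subset_insert hsub))
  | impI _ ih => intro Δ hsub; exact Prov.impI (ih (Set.insert_subset_insert hsub))
  | impE _ _ ih1 ih2 => intro Δ hsub; exact Prov.impE (ih1 hsub) (ih2 hsub)
  | em hcl => intro Δ _; exact Prov.em hcl

theorem Prov.cut {V : Type} {cl : Prop} {Γ : Set (PropForm V)} {φ ψ : PropForm V}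
    (h1 : Prov cl Γ φ) (h2 : Prov cl (insert φ Γ) ψ) : Prov cl Γ ψ :=
  Prov.impE (Prov.impI h2) h1

/-- Single-premise consequence: `φ ⊢ ψ` (intuitionistic when `cl = False`). -/
def Entails {V : Type} (cl : Prop) (φ ψ : PropForm V) : Prop := Prov cl {φ} ψ

theorem Entails.refl {V : Type} {cl : Prop} (φ : PropForm V) : Entails cl φ φ := Prov.ax rfl

theorem Entails.trans' {V : Type} {cl : Prop} {φ ψ χ : PropForm V}
    (h1 : Entails cl φ ψ) (h2 : Entails cl ψ χ) : Entails cl φ χ :=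
  Prov.cut h1 (h2.mono (Set.singleton_subset_iff.mpr (Set.mem_insert _ _)))

theorem Entails.and_congr {V : Type} {cl : Prop} {a b c d : PropForm V}
    (h1 : Entails cl a b) (h2 : Entails cl c d) :
    Entails cl (PropForm.and a c) (PropForm.and b d) := by
  have ha : Prov cl ({PropForm.and a c} : Set (PropForm V)) a := Prov.andE1 (Prov.ax rfl)
  have hc : Prov cl ({PropForm.and a c} : Set (PropForm V)) c := Prov.andE2 (Prov.ax rfl)
  exact Prov.andI
    (Prov.cut ha (h1.mono (Set.singleton_subset_iff.mpr (Set.mem_insert _ _))))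
    (Prov.cut hc (h2.mono (Set.singleton_subset_iff.mpr (Set.mem_insert _ _))))

theorem Entails.or_congr {V : Type} {cl : Prop} {a b c d : PropForm V}
    (h1 : Entails cl a b) (h2 : Entails cl c d) :
    Entails cl (PropForm.or a c) (PropForm.or b d) :=
  Prov.orE (Prov.ax rfl)
    (Prov.orI1 (h1.mono (Set.singleton_subset_iff.mpr (Set.mem_insert _ _))))
    (Prov.orI2 (h2.mono (Set.singleton_subset_iff.mpr (Set.mem_insert _ _))))

/-- Logical equivalence (intuitionistic when `cl = False`, classical when `cl = True`). -/
def provSetoid (cl : Prop) (V : Type) : Setoid (PropForm V) where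
  r φ ψ := Entails cl φ ψ ∧ Entails cl ψ φ
  iseqv := ⟨fun φ => ⟨Entails.refl φ, Entails.refl φ⟩, fun h => ⟨h.2, h.1⟩,
    fun h1 h2 => ⟨h1.1.trans' h2.1, h2.2.trans' h1.2⟩⟩

/-- The Lindenbaum algebra of formulas over `V` modulo logical equivalence.
`Lindenbaum False (Fin n)` is the free Heyting algebra `H_n`,
`Lindenbaum False ℕ` is `H_ω`, and `Lindenbaum True ℕ` is the free Boolean
algebra `B_ω`. -/
def Lindenbaum (cl : Prop) (V : Type) : Type := Quotient (provSetoid cl V)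

/-- The equivalence class of a formula. -/
def Lindenbaum.mk (cl : Prop) {V : Type} (φ : PropForm V) : Lindenbaum cl V :=
  Quotient.mk (provSetoid cl V) φ

/-- The order of the Lindenbaum algebra: `[φ] ≤ [ψ]` iff `φ ⊢ ψ`. -/
def Lindenbaum.le {cl : Prop} {V : Type} : Lindenbaum cl V → Lindenbaum cl V → Prop :=
  Quotient.lift₂ (Entails cl) (by
    intro a b a' b' ha hb
    obtain ⟨ha1, ha2⟩ := ha
    obtain ⟨hb1, hb2⟩ := hb
    exact propext ⟨fun h => (ha2.trans' h).trans' hb1, fun h => (ha1.trans' h).trans' hb2⟩)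

/-- The meet `∧` of the Lindenbaum algebra. -/
def Lindenbaum.inf {cl : Prop} {V : Type} :
    Lindenbaum cl V → Lindenbaum cl V → Lindenbaum cl V :=
  Quotient.map₂ PropForm.and (by
    intro a a' ha b b' hb
    obtain ⟨ha1, ha2⟩ := ha
    obtain ⟨hb1, hb2⟩ := hb
    exact ⟨ha1.and_congr hb1, ha2.and_congr hb2⟩)

/-- The join `∨` of the Lindenbaum algebra. -/
def Lindenbaum.sup {cl : Prop} {V : Type} :
    Lindenbaum cl V → Lindenbaum cl V → Lindenbaum cl V :=
  Quotient.map₂ PropForm.or (by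
    intro a a' ha b b' hb
    obtain ⟨ha1, ha2⟩ := ha
    obtain ⟨hb1, hb2⟩ := hb
    exact ⟨ha1.or_congr hb1, ha2.or_congr hb2⟩)


/-! ### Prime theories and the Aczel slash -/

section Slash

variable {V : Type}

theorem Prov.subst {cl : Prop} {Δ : Set (PropForm V)} {φ : PropForm V} (h : Prov cl Δ φ) :
    ∀ {Γ : Set (PropForm V)}, (∀ δ ∈ Δ, Prov cl Γ δ) → Prov cl Γ φ := by
  have lift : ∀ {Γ Δ : Set (PropForm V)} (χ : PropForm V), (∀ δ ∈ Δ, Prov cl Γ δ) →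
      ∀ δ ∈ insert χ Δ, Prov cl (insert χ Γ) δ := by
    rintro Γ Δ χ hΔ δ (rfl | hδ)
    · exact Prov.ax (Set.mem_insert _ _)
    · exact (hΔ δ hδ).mono (Set.subset_insert _ _)
  induction h with
  | ax hmem => intro Γ hΓ; exact hΓ _ hmem
  | topI => intro Γ _; exact Prov.topI
  | botE _ ih => intro Γ hΓ; exact Prov.botE (ih hΓ)
  | andI _ _ ih1 ih2 => intro Γ hΓ; exact Prov.andI (ih1 hΓ) (ih2 hΓ)
  | andE1 _ ih => intro Γ hΓ; exact Prov.andE1 (ih hΓ)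
  | andE2 _ ih => intro Γ hΓ; exact Prov.andE2 (ih hΓ)
  | orI1 _ ih => intro Γ hΓ; exact Prov.orI1 (ih hΓ)
  | orI2 _ ih => intro Γ hΓ; exact Prov.orI2 (ih hΓ)
  | orE _ _ _ ih1 ih2 ih3 =>
      intro Γ hΓ
      exact Prov.orE (ih1 hΓ) (ih2 (lift _ hΓ)) (ih3 (lift _ hΓ))
  | impI _ ih => intro Γ hΓ; exact Prov.impI (ih (lift _ hΓ))
  | impE _ _ ih1 ih2 => intro Γ hΓ; exact Prov.impE (ih1 hΓ) (ih2 hΓ)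
  | em hcl => intro Γ _; exact Prov.em hcl

/-- `Γ` has the disjunction property.  Inconsistent `Γ` are allowed. -/
def HasDP (Γ : Set (PropForm V)) : Prop :=
  ∀ A B : PropForm V, IProv Γ (.or A B) → IProv Γ A ∨ IProv Γ B

/-- The Aczel slash `Γ | φ`.  The clause for `⊥` is `Γ ⊢ ⊥`, so that an inconsistent `Γ` slashes
every formula. -/
def Slash (Γ : Set (PropForm V)) : PropForm V → Prop
  | .var v => IProv Γ (.var v)
  | .bot => IProv Γ .bot
  | .top => True
  | .and A B => Slash Γ A ∧ Slash Γ B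
  | .or A B => Slash Γ A ∨ Slash Γ B
  | .imp A B => IProv Γ (.imp A B) ∧ (Slash Γ A → Slash Γ B)

theorem Slash.prov {Γ : Set (PropForm V)} : ∀ {φ : PropForm V}, Slash Γ φ → IProv Γ φ
  | .var _, h => h
  | .bot, h => h
  | .top, _ => Prov.topI
  | .and _ _, h => Prov.andI h.1.prov h.2.prov
  | .or _ _, h => h.elim (fun h => Prov.orI1 h.prov) (fun h => Prov.orI2 h.prov)
  | .imp _ _, h => h.1

theorem Slash.of_bot {Γ : Set (PropForm V)} (h : IProv Γ .bot) : ∀ φ : PropForm V, Slash Γ φ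
  | .var _ => Prov.botE h
  | .bot => h
  | .top => trivial
  | .and A B => ⟨Slash.of_bot h A, Slash.of_bot h B⟩
  | .or A _ => Or.inl (Slash.of_bot h A)
  | .imp _ B => ⟨Prov.botE h, fun _ => Slash.of_bot h B⟩

/-- Intuitionistic consequence preserves the slash. -/
theorem Slash.sound {Γ Δ : Set (PropForm V)} {φ : PropForm V} (h : IProv Δ φ) :
    (∀ δ ∈ Δ, Slash Γ δ) → Slash Γ φ := by
  have ext : ∀ {Δ : Set (PropForm V)} {χ : PropForm V}, (∀ δ ∈ Δ, Slash Γ δ) → Slash Γ χ →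
      ∀ δ ∈ insert χ Δ, Slash Γ δ := by
    rintro Δ χ hΔ hχ δ (rfl | hδ)
    · exact hχ
    · exact hΔ δ hδ
  induction h with
  | ax hmem => intro hΔ; exact hΔ _ hmem
  | topI => intro _; trivial
  | botE _ ih => intro hΔ; exact Slash.of_bot (ih hΔ) _
  | andI _ _ ih1 ih2 => intro hΔ; exact ⟨ih1 hΔ, ih2 hΔ⟩
  | andE1 _ ih => intro hΔ; exact (ih hΔ).1
  | andE2 _ ih => intro hΔ; exact (ih hΔ).2
  | orI1 _ ih => intro hΔ; exact Or.inl (ih hΔ)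
  | orI2 _ ih => intro hΔ; exact Or.inr (ih hΔ)
  | orE _ _ _ ih1 ih2 ih3 =>
      intro hΔ
      rcases ih1 hΔ with h | h
      · exact ih2 (ext hΔ h)
      · exact ih3 (ext hΔ h)
  | impI hp ih =>
      intro hΔ
      exact ⟨(Prov.impI hp).subst fun δ hδ => (hΔ δ hδ).prov, fun hA => ih (ext hΔ hA)⟩
  | impE _ _ ih1 ih2 => intro hΔ; exact (ih1 hΔ).2 (ih2 hΔ)
  | em hcl => exact hcl.elim

theorem HasDP.of_slash {Γ : Set (PropForm V)} (h : ∀ γ ∈ Γ, Slash Γ γ) : HasDP Γ :=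
  fun _ _ hAB => (Slash.sound hAB h).imp Slash.prov Slash.prov

/-- The set of subformulas of a formula, the formula included. -/
def subforms : PropForm V → Set (PropForm V)
  | .var v => {.var v}
  | .bot => {.bot}
  | .top => {.top}
  | .and A B => insert (.and A B) (subforms A ∪ subforms B)
  | .or A B => insert (.or A B) (subforms A ∪ subforms B)
  | .imp A B => insert (.imp A B) (subforms A ∪ subforms B)

theorem mem_subforms_self (φ : PropForm V) : φ ∈ subforms φ := by
  cases φ <;> simp [subforms]

theorem subforms_finite (φ : PropForm V) : (subforms φ).Finite := by
  induction φ with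
  | var | bot | top => exact Set.finite_singleton _
  | and _ _ h1 h2 | or _ _ h1 h2 | imp _ _ h1 h2 => exact (h1.union h2).insert _

theorem subforms_trans {φ ψ : PropForm V} (h : ψ ∈ subforms φ) : subforms ψ ⊆ subforms φ := by
  induction φ with
  | var | bot | top =>
      obtain rfl : ψ = _ := h
      exact subset_rfl
  | and _ _ h1 h2 | or _ _ h1 h2 | imp _ _ h1 h2 =>
      rcases h with rfl | h | h
      · exact subset_rfl
      · exact ((h1 h).trans Set.subset_union_left).trans (Set.subset_insert _ _)
      · exact ((h2 h).trans Set.subset_union_right).trans (Set.subset_insert _ _)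

/-- If `Γ` decides, in the sense of the disjunction property, all disjunctions among the
subformulas of `ψ`, then it slashes `ψ` as soon as it proves it. -/
theorem slash_of_prov {Γ : Set (PropForm V)} : ∀ {ψ : PropForm V},
    (∀ A B, PropForm.or A B ∈ subforms ψ → IProv Γ (.or A B) → IProv Γ A ∨ IProv Γ B) →
    IProv Γ ψ → Slash Γ ψ := by
  intro ψ
  induction ψ with
  | var | bot => intro _ h; exact h
  | top => intro _ _; trivial
  | and A B ihA ihB =>
      intro H h
      exact ⟨ihA (fun C D hm => H C D (Or.inr (Or.inl hm))) (Prov.andE1 h),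
        ihB (fun C D hm => H C D (Or.inr (Or.inr hm))) (Prov.andE2 h)⟩
  | or A B ihA ihB =>
      intro H h
      exact (H A B (mem_subforms_self _) h).imp
        (ihA (fun C D hm => H C D (Or.inr (Or.inl hm))))
        (ihB (fun C D hm => H C D (Or.inr (Or.inr hm))))
  | imp A B _ ihB =>
      intro H h
      exact ⟨h, fun hA => ihB (fun C D hm => H C D (Or.inr (Or.inr hm))) (Prov.impE h hA.prov)⟩

/-- A set of subformulas of `φ₀` is, as far as its consequences are concerned, the intersection
of finitely many theories with the disjunction property. -/
theorem exists_finite_prime_decomposition (φ₀ : PropForm V) (Γ : Set (PropForm V))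
    (hΓ : Γ ⊆ subforms φ₀) :
    ∃ L : Set (Set (PropForm V)), L.Finite ∧ (∀ Δ ∈ L, HasDP Δ) ∧
      ∀ ψ, IProv Γ ψ ↔ ∀ Δ ∈ L, IProv Δ ψ := by
  induction hn : (subforms φ₀ \ Γ).ncard using Nat.strong_induction_on generalizing Γ with
  | _ n ih =>
  subst hn
  by_cases H : ∀ A B, PropForm.or A B ∈ subforms φ₀ → IProv Γ (.or A B) → IProv Γ A ∨ IProv Γ B
  · refine ⟨{Γ}, Set.finite_singleton _, ?_, by simp⟩
    rintro Δ rfl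
    exact HasDP.of_slash fun γ hγ =>
      slash_of_prov (fun A B hm => H A B (subforms_trans (hΓ hγ) hm)) (Prov.ax hγ)
  · push Not at H
    obtain ⟨A, B, hm, hAB, hA, hB⟩ := H
    -- Adjoining an unproved subformula strictly shrinks the set of remaining subformulas.
    have step : ∀ C ∈ subforms φ₀, ¬ IProv Γ C →
        ∃ L : Set (Set (PropForm V)), L.Finite ∧ (∀ Δ ∈ L, HasDP Δ) ∧
          ∀ ψ, IProv (insert C Γ) ψ ↔ ∀ Δ ∈ L, IProv Δ ψ := by
      intro C hC hnC
      refine ih _ ?_ _ (Set.insert_subset hC hΓ) rfl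
      refine Set.ncard_lt_ncard ?_ (subforms_finite φ₀).sdiff
      refine ⟨Set.sdiff_subset_sdiff_right (Set.subset_insert _ _), fun hsub => ?_⟩
      exact (hsub ⟨hC, fun h => hnC (Prov.ax h)⟩).2 (Set.mem_insert _ _)
    obtain ⟨L₁, hf₁, hp₁, he₁⟩ :=
      step A (subforms_trans hm (Or.inr (Or.inl (mem_subforms_self A)))) hA
    obtain ⟨L₂, hf₂, hp₂, he₂⟩ :=
      step B (subforms_trans hm (Or.inr (Or.inr (mem_subforms_self B)))) hB
    refine ⟨L₁ ∪ L₂, hf₁.union hf₂, fun Δ hΔ => hΔ.elim (hp₁ Δ) (hp₂ Δ), fun ψ => ?_⟩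
    constructor
    · rintro h Δ (hΔ | hΔ)
      · exact (he₁ ψ).1 (h.mono (Set.subset_insert _ _)) Δ hΔ
      · exact (he₂ ψ).1 (h.mono (Set.subset_insert _ _)) Δ hΔ
    · intro h
      exact Prov.orE hAB ((he₁ ψ).2 fun Δ hΔ => h Δ (Or.inl hΔ))
        ((he₂ ψ).2 fun Δ hΔ => h Δ (Or.inr hΔ))

end Slash

/-! ### Lindenbaum algebras -/

/-- The theory `Δ` proves the element `h` of the intuitionistic Lindenbaum algebra. -/
def ProvesClass {V : Type} (Δ : Set (PropForm V)) : Lindenbaum False V → Prop :=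
  Quotient.lift (IProv Δ) (by
    rintro a b ⟨h1, h2⟩
    exact propext ⟨fun h => h1.subst (by rintro δ rfl; exact h),
      fun h => h2.subst (by rintro δ rfl; exact h)⟩)

theorem ProvesClass.sup_left {V : Type} {Δ : Set (PropForm V)} {h k : Lindenbaum False V}
    (hh : ProvesClass Δ h) : ProvesClass Δ (h.sup k) := by
  induction h using Quotient.inductionOn
  induction k using Quotient.inductionOn
  exact Prov.orI1 hh

theorem ProvesClass.sup_right {V : Type} {Δ : Set (PropForm V)} {h k : Lindenbaum False V}
    (hk : ProvesClass Δ k) : ProvesClass Δ (h.sup k) := by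
  induction h using Quotient.inductionOn
  induction k using Quotient.inductionOn
  exact Prov.orI2 hk

theorem HasDP.provesClass_sup {V : Type} {Δ : Set (PropForm V)} (hΔ : HasDP Δ)
    {h k : Lindenbaum False V} (hs : ProvesClass Δ (h.sup k)) :
    ProvesClass Δ h ∨ ProvesClass Δ k := by
  induction h using Quotient.inductionOn
  induction k using Quotient.inductionOn
  exact hΔ _ _ hs

/-- Algebraic form of the decomposition: finitely many prime theories prove `b`, and whatever all
of them prove lies above `b`, the order being expressed by joins. -/
theorem exists_primes_of_class {V : Type} (b : Lindenbaum False V) :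
    ∃ L : Set (Set (PropForm V)), L.Finite ∧ (∀ Δ ∈ L, HasDP Δ) ∧
      (∀ Δ ∈ L, ProvesClass Δ b) ∧ ∀ h, (∀ Δ ∈ L, ProvesClass Δ h) → b.sup h = h := by
  induction b using Quotient.inductionOn with | _ φ =>
  obtain ⟨L, hf, hp, he⟩ := exists_finite_prime_decomposition φ {φ}
    (Set.singleton_subset_iff.mpr (mem_subforms_self φ))
  refine ⟨L, hf, hp, (he φ).1 (Prov.ax rfl), fun h => ?_⟩
  induction h using Quotient.inductionOn with | _ ψ =>
  intro hL
  have hφψ : IProv {φ} ψ := (he ψ).2 hL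
  refine Quotient.sound ⟨?_, Prov.orI2 (Prov.ax rfl)⟩
  exact Prov.orE (Prov.ax rfl)
    (hφψ.mono (Set.singleton_subset_iff.mpr (Set.mem_insert _ _)))
    (Prov.ax (Set.mem_insert _ _))

/-- Truth of a formula under a two-valued assignment. -/
def truth {V : Type} (v : V → Prop) : PropForm V → Prop
  | .var x => v x
  | .bot => False
  | .top => True
  | .and A B => truth v A ∧ truth v B
  | .or A B => truth v A ∨ truth v B
  | .imp A B => truth v A → truth v B

theorem truth_of_prov {V : Type} {cl : Prop} (v : V → Prop) {Γ : Set (PropForm V)}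
    {φ : PropForm V} (h : Prov cl Γ φ) : (∀ γ ∈ Γ, truth v γ) → truth v φ := by
  have ext : ∀ {Δ : Set (PropForm V)} {χ : PropForm V}, (∀ δ ∈ Δ, truth v δ) → truth v χ →
      ∀ δ ∈ insert χ Δ, truth v δ := by
    rintro Δ χ hΔ hχ δ (rfl | hδ)
    · exact hχ
    · exact hΔ δ hδ
  induction h with
  | ax hmem => intro hΔ; exact hΔ _ hmem
  | topI => intro _; trivial
  | botE _ ih => intro hΔ; exact (ih hΔ).elim
  | andI _ _ ih1 ih2 => intro hΔ; exact ⟨ih1 hΔ, ih2 hΔ⟩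
  | andE1 _ ih => intro hΔ; exact (ih hΔ).1
  | andE2 _ ih => intro hΔ; exact (ih hΔ).2
  | orI1 _ ih => intro hΔ; exact Or.inl (ih hΔ)
  | orI2 _ ih => intro hΔ; exact Or.inr (ih hΔ)
  | orE _ _ _ ih1 ih2 ih3 =>
      intro hΔ
      rcases ih1 hΔ with h | h
      · exact ih2 (ext hΔ h)
      · exact ih3 (ext hΔ h)
  | impI _ ih => intro hΔ hA; exact ih (ext hΔ hA)
  | impE _ _ ih1 ih2 => intro hΔ; exact ih1 hΔ (ih2 hΔ)
  | em _ => intro _; exact Classical.em _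

theorem mk_var_injective {V : Type} :
    Function.Injective fun i : V => Lindenbaum.mk True (PropForm.var i) := by
  intro i j hij
  have h : Entails True (PropForm.var i) (PropForm.var j) := (Quotient.exact hij).1
  exact (truth_of_prov (fun k => i = k) h (by rintro γ rfl; exact rfl) : i = j)

theorem mk_eq_mk {V : Type} {cl : Prop} {φ ψ : PropForm V} (h1 : Entails cl φ ψ)
    (h2 : Entails cl ψ φ) : Lindenbaum.mk cl φ = Lindenbaum.mk cl ψ :=
  Quotient.sound ⟨h1, h2⟩

/-- An injective join-preserving map out of `B_ω` into a free Heyting algebra does not exist. -/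
theorem no_sup_embedding {V : Type} (f : Lindenbaum True ℕ → Lindenbaum False V)
    (hinj : Function.Injective f) (hsup : ∀ a b, f (a.sup b) = (f a).sup (f b)) : False := by
  obtain ⟨L, hf, hp, htop, hle⟩ := exists_primes_of_class (f (Lindenbaum.mk True .top))
  let g : Lindenbaum True ℕ → Set (Set (PropForm V)) := fun x => {Δ ∈ L | ProvesClass Δ (f x)}
  have key : ∀ φ ψ : PropForm ℕ, g (Lindenbaum.mk True φ) ⊆ g (Lindenbaum.mk True ψ) →
      Entails True φ ψ := by
    intro φ ψ hsub
    let y := Lindenbaum.mk True ψ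
    let x := Lindenbaum.mk True φ
    let nx := Lindenbaum.mk True (PropForm.imp φ .bot)
    have hx : x.sup nx = Lindenbaum.mk True .top := mk_eq_mk Prov.topI (Prov.em trivial)
    have hall : ∀ Δ ∈ L, ProvesClass Δ (f (y.sup nx)) := by
      intro Δ hΔ
      have h1 := htop Δ hΔ
      rw [← hx, hsup] at h1
      rw [hsup]
      rcases (hp Δ hΔ).provesClass_sup h1 with h | h
      · exact ProvesClass.sup_left (hsub ⟨hΔ, h⟩).2
      · exact ProvesClass.sup_right h
    have h2 := hle _ hall
    rw [← hsup] at h2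
    have h3 : Entails True PropForm.top (PropForm.or ψ (PropForm.imp φ .bot)) :=
      Entails.trans' (Prov.orI1 (Prov.ax rfl)) (Quotient.exact (hinj h2)).1
    have h4 : Prov True {φ} (PropForm.or ψ (PropForm.imp φ .bot)) :=
      h3.subst (by rintro δ rfl; exact Prov.topI)
    exact Prov.orE h4 (Prov.ax (Set.mem_insert _ _))
      (Prov.botE (Prov.impE (Prov.ax (Set.mem_insert _ _)) (Prov.ax (Or.inr rfl))))
  have ginj : Function.Injective g := by
    intro x y
    induction x using Quotient.inductionOn with | _ φ =>
    induction y using Quotient.inductionOn with | _ ψ =>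
    intro h
    exact Quotient.sound ⟨key φ ψ h.subset, key ψ φ h.symm.subset⟩
  have hfin : (Set.range g).Finite :=
    hf.finite_subsets.subset (by rintro _ ⟨x, rfl⟩; exact Set.sep_subset _ _)
  exact Set.infinite_range_of_injective (ginj.comp mk_var_injective)
    (hfin.subset (Set.range_comp_subset_range _ _))

/-- The free Boolean algebra `B_ω` on countably many generators (the countable atomless
Boolean algebra, realized as the classical Lindenbaum algebra) admits no lattice embedding
into `H_n` for any `n ≥ 1`, nor into `H_ω`. -/
theorem no_lattice_embedding_Bomega :
    (∀ n : ℕ, 1 ≤ n →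
      ¬∃ f : Lindenbaum True ℕ → Lindenbaum False (Fin n),
        Function.Injective f ∧
        (∀ a b, f (Lindenbaum.inf a b) = Lindenbaum.inf (f a) (f b)) ∧
        (∀ a b, f (Lindenbaum.sup a b) = Lindenbaum.sup (f a) (f b))) ∧
    ¬∃ f : Lindenbaum True ℕ → Lindenbaum False ℕ,
      Function.Injective f ∧
      (∀ a b, f (Lindenbaum.inf a b) = Lindenbaum.inf (f a) (f b)) ∧
      (∀ a b, f (Lindenbaum.sup a b) = Lindenbaum.sup (f a) (f b)) := by
  exact ⟨fun _ _ ⟨f, hinj, _, hsup⟩ => no_sup_embedding f hinj hsup,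
    fun ⟨f, hinj, _, hsup⟩ => no_sup_embedding f hinj hsup⟩
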